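/- Let a, b, s, w be positive integers and let k be a nonnegative integer. Let (T,X) be a tree-decomposition of a graph G of width strictly less than w, and let h = (2(a+2)w + 2)b. If there is a cascade η of height h and size s + k in (T,X) such that |⋂_{t ∈ V(T_h)} X_{η(t)}| ≥ k, then either there is a cascade η' of height a and size s + k in (T,X) such that |⋂_{t ∈ V(T_a)} X_{η'(t)}| ≥ k + 1, or there is an injective cascade of height b, size s + k, and common intersection set of size k in (T,X). -/

import Mathlib

/-!
Common definitions: minors, widths, connectivity, the specific graphs
`K4`, `K23`, `C32`, `graphA`, the binary trees `CT_h`, the graphs `𝒫_k`, `𝒬_k`,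
the trees `T_h`, homeomorphic embeddings, cascades, and related notions,
following Dang--Thomas, "Minors of two-connected graphs of large path-width".
-/

open SimpleGraph

/-- A minor model of `H` in `G`: branch sets `f w` are nonempty, connected,
pairwise disjoint, and edges of `H` are realized by edges of `G` between branch sets. -/
def IsMinorModel {W V : Type*} (H : SimpleGraph W) (G : SimpleGraph V) (f : W → Set V) : Prop :=
  (∀ w, (f w).Nonempty) ∧
  (∀ w, (G.induce (f w)).Connected) ∧
  (∀ w₁ w₂ : W, w₁ ≠ w₂ → Disjoint (f w₁) (f w₂)) ∧
  (∀ w₁ w₂ : W, H.Adj w₁ w₂ → ∃ v₁ ∈ f w₁, ∃ v₂ ∈ f w₂, G.Adj v₁ v₂)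

/-- `H` is (isomorphic to) a minor of `G`. -/
def IsMinor {W V : Type*} (H : SimpleGraph W) (G : SimpleGraph V) : Prop :=
  ∃ f : W → Set V, IsMinorModel H G f

/-- The complete graph on four vertices. -/
def K4 : SimpleGraph (Fin 4) := ⊤

/-- The complete bipartite graph `K_{2,3}`. -/
def K23 : SimpleGraph (Fin 2 ⊕ Fin 3) := completeBipartiteGraph (Fin 2) (Fin 3)

/-- The graph `A`: a cycle `a₁a₂a₃a₄a₅a₆a₁` plus the edges `a₁a₃`, `a₃a₅`, `a₅a₁`. -/
def graphA : SimpleGraph (Fin 6) :=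
  SimpleGraph.fromEdgeSet
    {s(0, 1), s(1, 2), s(2, 3), s(3, 4), s(4, 5), s(5, 0), s(0, 2), s(2, 4), s(4, 0)}

/-- The graph `C_{3,2}`: two disjoint triangles. -/
def C32 : SimpleGraph (Fin 2 × Fin 3) :=
  SimpleGraph.fromRel (fun u v => u.1 = v.1)

/-- A graph is outerplanar iff it has no `K₄` minor and no `K_{2,3}` minor
(the classical characterization of outerplanarity). -/
def Outerplanar {V : Type*} (G : SimpleGraph V) : Prop :=
  ¬ IsMinor K4 G ∧ ¬ IsMinor K23 G

/-- `G` is `k`-connected: it has more than `k` vertices and deleting fewer than `k`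
vertices leaves a connected graph. -/
def IsKConnected {V : Type*} [Fintype V] (k : ℕ) (G : SimpleGraph V) : Prop :=
  k + 1 ≤ Fintype.card V ∧
  ∀ S : Finset V, S.card < k → (G.induce ((↑S : Set V)ᶜ)).Connected

/-- `(Tr, X)` is a tree-decomposition of `G`: `Tr` is a tree, the bags `X t` cover all
vertices and edges (W1), and whenever `t₂` lies on the path of `Tr` between `t₁` and `t₃`
we have `X t₁ ∩ X t₃ ⊆ X t₂` (W2). -/
def IsTreeDecomp {V T : Type*} (G : SimpleGraph V) (Tr : SimpleGraph T) (X : T → Finset V) :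
    Prop :=
  Tr.IsTree ∧
  (∀ v : V, ∃ t, v ∈ X t) ∧
  (∀ u v : V, G.Adj u v → ∃ t, u ∈ X t ∧ v ∈ X t) ∧
  (∀ (t₁ t₂ t₃ : T) (p : Tr.Walk t₁ t₃), p.IsPath → t₂ ∈ p.support →
    ∀ v : V, v ∈ X t₁ → v ∈ X t₃ → v ∈ X t₂)

/-- A path-decomposition of `G`, with bags indexed by `Fin n`. -/
def IsPathDecomp {V : Type*} (G : SimpleGraph V) {n : ℕ} (X : Fin n → Finset V) : Prop :=
  (∀ v : V, ∃ i, v ∈ X i) ∧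
  (∀ u v : V, G.Adj u v → ∃ i, u ∈ X i ∧ v ∈ X i) ∧
  (∀ i j k : Fin n, i ≤ j → j ≤ k → ∀ v : V, v ∈ X i → v ∈ X k → v ∈ X j)

/-- The path-width of a finite graph: the least `w` such that `G` has a
path-decomposition all of whose bags have at most `w + 1` vertices. -/
noncomputable def pathwidth {V : Type*} [Fintype V] (G : SimpleGraph V) : ℕ :=
  sInf {w | ∃ (n : ℕ) (X : Fin n → Finset V), IsPathDecomp G X ∧ ∀ i, (X i).card ≤ w + 1}

/-- The tree-width of a finite graph: the least `w` such that `G` has a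
tree-decomposition all of whose bags have at most `w + 1` vertices. -/
noncomputable def treewidth {V : Type*} [Fintype V] (G : SimpleGraph V) : ℕ :=
  sInf {w | ∃ (T : Type) (_ : Fintype T) (Tr : SimpleGraph T) (X : T → Finset V),
    IsTreeDecomp G Tr X ∧ ∀ t, (X t).card ≤ w + 1}

/-- Vertices of the binary tree `CT_h`: paths from the root, recorded as reversed
lists of left/right moves, of length at most `h`. -/
abbrev CTVert (h : ℕ) := {l : List Bool // l.length ≤ h}

/-- The binary tree `CT_h` of height `h`. -/
def CTgraph (h : ℕ) : SimpleGraph (CTVert h) :=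
  SimpleGraph.fromEdgeSet
    {e | ∃ (b : Bool) (σ : List Bool) (hσ : σ.length < h),
      e = s((⟨σ, le_of_lt hσ⟩ : CTVert h), (⟨b :: σ, by simpa using hσ⟩ : CTVert h))}

/-- The graph `𝒫_k`: the binary tree `CT_k` together with one extra vertex (`none`)
adjacent to every leaf of `CT_k`. -/
def Pgraph (k : ℕ) : SimpleGraph (Option (CTVert k)) :=
  SimpleGraph.fromEdgeSet
    ({e | ∃ (b : Bool) (σ : List Bool) (hσ : σ.length < k),
        e = s(some (⟨σ, le_of_lt hσ⟩ : CTVert k), some (⟨b :: σ, by simpa using hσ⟩ : CTVert k))} ∪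
     {e | ∃ l : CTVert k, l.1.length = k ∧ e = s(none, some l)})

/-- Vertices of `𝒬_k`: the two base vertices of the root triangle (`Sum.inl false` and
`Sum.inl true`), together with one apex vertex for each node of the complete binary tree
of depth `< k` (recorded as a reversed list of moves). -/
abbrev QVert (k : ℕ) := Bool ⊕ {l : List Bool // l.length < k}

/-- The two ends of the base edge of the copy of the triangle at node `σ` of `𝒬_k`. -/
def qbase (k : ℕ) : List Bool → QVert k × QVert k
  | [] => (Sum.inl false, Sum.inl true)
  | b :: σ =>
      ((if b then (qbase k σ).2 else (qbase k σ).1),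
        if h : σ.length < k then Sum.inr ⟨σ, h⟩ else Sum.inl false)

/-- The graph `𝒬_k`, built from triangles as in the recursive definition: the triangle at
node `σ` consists of the base edge `qbase k σ` together with the apex vertex `Sum.inr σ`;
the base edge of `𝒬_k` is `s(Sum.inl false, Sum.inl true)`. -/
def Qgraph (k : ℕ) : SimpleGraph (QVert k) :=
  SimpleGraph.fromEdgeSet
    ({s(Sum.inl false, Sum.inl true)} ∪
     {e | ∃ (σ : List Bool) (h : σ.length < k),
        e = s(Sum.inr ⟨σ, h⟩, (qbase k σ).1) ∨ e = s(Sum.inr ⟨σ, h⟩, (qbase k σ).2)})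

/-- The minor vertices of the tree `T_h` (one for each string of length `≤ h`). -/
abbrev MVert (h : ℕ) := {l : List Bool // l.length ≤ h}

/-- The major vertices of the tree `T_h` (one for each string of length `≤ h - 1`). -/
abbrev JVert (h : ℕ) := {l : List Bool // l.length + 1 ≤ h}

/-- Vertices of the tree `T_h` (obtained from `CT_h` by subdividing every edge not incident
with a degree-one vertex and adding the minor root). -/
abbrev TVert (h : ℕ) := MVert h ⊕ JVert h

/-- The tree `T_h`: each major vertex `σ` is adjacent to the minor vertices `σ` (its parent),
`false :: σ` (its left neighbor) and `true :: σ` (its right neighbor). -/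
def Tgraph (h : ℕ) : SimpleGraph (TVert h) :=
  SimpleGraph.fromEdgeSet
    {e | ∃ (σ : List Bool) (hσ : σ.length + 1 ≤ h),
      e = s(Sum.inr ⟨σ, hσ⟩, Sum.inl ⟨σ, Nat.le_of_succ_le hσ⟩) ∨
      ∃ b : Bool, e = s(Sum.inr ⟨σ, hσ⟩, Sum.inl ⟨b :: σ, by simpa using hσ⟩)}

/-- A homeomorphic embedding of `TA` into `TB`: an injection such that for any two edges of
`TA` sharing an end `t`, the corresponding paths of `TB` are edge-disjoint. -/
def IsHomeoEmb {A B : Type*} (TA : SimpleGraph A) (TB : SimpleGraph B) (η : A → B) : Prop :=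
  Function.Injective η ∧
  ∀ ⦃t t₁ t₂ : A⦄, TA.Adj t t₁ → TA.Adj t t₂ → t₁ ≠ t₂ →
    ∀ (p₁ : TB.Walk (η t) (η t₁)) (p₂ : TB.Walk (η t) (η t₂)),
      p₁.IsPath → p₂.IsPath → ∀ e ∈ p₁.edges, e ∉ p₂.edges

/-- `v` lies in the span of `η`: it lies on a path of `TB` between two vertices in the
image of `η`. -/
def inSpan {A B : Type*} (TB : SimpleGraph B) (η : A → B) (v : B) : Prop :=
  ∃ (a₁ a₂ : A) (p : TB.Walk (η a₁) (η a₂)), p.IsPath ∧ v ∈ p.support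

/-- A cascade of height `h` and size `s` in the tree-decomposition `(Tr, X)`:
a homeomorphic embedding of `T_h` with `|X (η t)| = s` for every minor vertex `t`
and `|X t| ≥ s` for every `t` in the span. -/
def IsCascade {V T : Type*} (Tr : SimpleGraph T) (X : T → Finset V) (h s : ℕ)
    (η : TVert h → T) : Prop :=
  IsHomeoEmb (Tgraph h) Tr η ∧
  (∀ l : MVert h, (X (η (Sum.inl l))).card = s) ∧
  (∀ t : T, inSpan Tr η t → s ≤ (X t).card)

/-- An injective cascade with common intersection set `I`. -/
def IsInjectiveCascade {V T : Type*} (Tr : SimpleGraph T) (X : T → Finset V) (h s : ℕ)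
    (η : TVert h → T) (I : Finset V) : Prop :=
  IsCascade Tr X h s η ∧ I.card < s ∧
  ∀ t t' : TVert h, t ≠ t' → ((X (η t) : Set V) ∩ (X (η t') : Set V)) = (I : Set V)

/-- A family of `s` disjoint paths in `G \ I` (a linkage). -/
def IsLinkage {V : Type*} (G : SimpleGraph V) (I : Finset V) {s : ℕ} {x y : Fin s → V}
    (P : ∀ i : Fin s, G.Walk (x i) (y i)) : Prop :=
  (∀ i, (P i).IsPath) ∧
  (∀ i, ∀ v ∈ (P i).support, v ∉ I) ∧
  (∀ i j, i ≠ j → ∀ v ∈ (P i).support, v ∉ (P j).support)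

/-- An ordered cascade: an injective cascade of size `s + |I|` with common intersection set
`I`, together with orderings `ξ t : Fin s → X (η t) \ I` of the bags at minor vertices, such
that at every major vertex there are left and right linkages connecting corresponding
vertices. -/
def IsOrderedCascade {V T : Type*} (G : SimpleGraph V) (Tr : SimpleGraph T)
    (X : T → Finset V) (h s : ℕ) (η : TVert h → T) (I : Finset V)
    (ξ : MVert h → Fin s → V) : Prop :=
  IsInjectiveCascade Tr X h (s + I.card) η I ∧
  (∀ t : MVert h, Function.Injective (ξ t) ∧
    Set.range (ξ t) = (X (η (Sum.inl t)) : Set V) \ (I : Set V)) ∧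
  ∀ (σ : List Bool) (hσ : σ.length + 1 ≤ h),
    (∃ P : ∀ i : Fin s,
        G.Walk (ξ ⟨σ, Nat.le_of_succ_le hσ⟩ i) (ξ ⟨false :: σ, by simpa using hσ⟩ i),
      IsLinkage G I P) ∧
    (∃ Q : ∀ i : Fin s,
        G.Walk (ξ ⟨σ, Nat.le_of_succ_le hσ⟩ i) (ξ ⟨true :: σ, by simpa using hσ⟩ i),
      IsLinkage G I Q)

/-- The vertex set of the `η`-torso at the major vertex `σ` of `T_h`: the union of the bags
`X t - I` over all `t` such that the path in `Tr` from `t` to `η σ` contains none of the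
images of the three minor neighbors of `σ` as an internal vertex. -/
def torsoSet {V T : Type*} (Tr : SimpleGraph T) (X : T → Finset V) {h : ℕ}
    (η : TVert h → T) (I : Finset V) (σ : List Bool) (hσ : σ.length + 1 ≤ h) : Set V :=
  {v | v ∉ I ∧ ∃ t : T,
    (∀ p : Tr.Walk t (η (Sum.inr ⟨σ, hσ⟩)), p.IsPath →
      ∀ u : T,
        (u = η (Sum.inl ⟨σ, Nat.le_of_succ_le hσ⟩) ∨
         u = η (Sum.inl ⟨false :: σ, by simpa using hσ⟩) ∨
         u = η (Sum.inl ⟨true :: σ, by simpa using hσ⟩)) →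
        u ∈ p.support → u = t ∨ u = η (Sum.inr ⟨σ, hσ⟩)) ∧
    v ∈ X t}

/-- `H` is a tripod in `G` with all vertices in `S`, center `c` and feet `f₁, f₂, f₃`:
the union of three paths from `c` to the feet, pairwise disjoint except for `c`,
at least two of which have length at least one. -/
def IsTripodOn {V : Type*} (G : SimpleGraph V) (S : Set V) (H : G.Subgraph)
    (c f₁ f₂ f₃ : V) : Prop :=
  ∃ (W₁ : G.Walk c f₁) (W₂ : G.Walk c f₂) (W₃ : G.Walk c f₃),
    W₁.IsPath ∧ W₂.IsPath ∧ W₃.IsPath ∧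
    (∀ v ∈ W₁.support, v ∈ S) ∧ (∀ v ∈ W₂.support, v ∈ S) ∧ (∀ v ∈ W₃.support, v ∈ S) ∧
    (∀ v, v ∈ W₁.support → v ∈ W₂.support → v = c) ∧
    (∀ v, v ∈ W₁.support → v ∈ W₃.support → v = c) ∧
    (∀ v, v ∈ W₂.support → v ∈ W₃.support → v = c) ∧
    ((1 ≤ W₁.length ∧ 1 ≤ W₂.length) ∨ (1 ≤ W₁.length ∧ 1 ≤ W₃.length) ∨
      (1 ≤ W₂.length ∧ 1 ≤ W₃.length)) ∧
    H = W₁.toSubgraph ⊔ W₂.toSubgraph ⊔ W₃.toSubgraph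

/-- The major vertex `σ` has property `A_{ij}` in the ordered cascade `η` with orderings
`ξ`: there are two disjoint tripods in the `η`-torso at `σ`, with feet as prescribed. -/
def HasPropA {V T : Type*} (G : SimpleGraph V) (Tr : SimpleGraph T) (X : T → Finset V)
    {h s : ℕ} (η : TVert h → T) (I : Finset V) (ξ : MVert h → Fin s → V)
    (σ : List Bool) (hσ : σ.length + 1 ≤ h) (i j : Fin s) : Prop :=
  ∃ (Li Lj : G.Subgraph) (ci cj : V),
    (∃ m₂ m₃ : Fin s, (m₂ = i ∨ m₂ = j) ∧ (m₃ = i ∨ m₃ = j) ∧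
      IsTripodOn G (torsoSet Tr X η I σ hσ) Li ci
        (ξ ⟨σ, Nat.le_of_succ_le hσ⟩ i)
        (ξ ⟨false :: σ, by simpa using hσ⟩ m₂)
        (ξ ⟨true :: σ, by simpa using hσ⟩ m₃)) ∧
    (∃ m₂ m₃ : Fin s, (m₂ = i ∨ m₂ = j) ∧ (m₃ = i ∨ m₃ = j) ∧
      IsTripodOn G (torsoSet Tr X η I σ hσ) Lj cj
        (ξ ⟨σ, Nat.le_of_succ_le hσ⟩ j)
        (ξ ⟨false :: σ, by simpa using hσ⟩ m₂)
        (ξ ⟨true :: σ, by simpa using hσ⟩ m₃)) ∧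
    Disjoint Li.verts Lj.verts

/-- The major vertex `σ` has property `B_{ij}`: there are two tripods `L_i`, `L_j` in the
`η`-torso at `σ`, with feet `v_{m,1}, v_{m,2}, v_{m,3}` where `{v_{i,y}, v_{j,y}}` equals
`{ξ_{t_y} i, ξ_{t_y} j}` for each `y`, which intersect exactly in a path that is the
intersection of the branch of `L_i` to `v_{i,3}` and the branch of `L_j` to `v_{j,2}`,
and which avoids both centers. -/
def HasPropB {V T : Type*} (G : SimpleGraph V) (Tr : SimpleGraph T) (X : T → Finset V)
    {h s : ℕ} (η : TVert h → T) (I : Finset V) (ξ : MVert h → Fin s → V)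
    (σ : List Bool) (hσ : σ.length + 1 ≤ h) (i j : Fin s) : Prop :=
  ∃ (vi vj : Fin 3 → V) (ci cj : V)
    (Wi : ∀ y : Fin 3, G.Walk ci (vi y)) (Wj : ∀ y : Fin 3, G.Walk cj (vj y)),
    (∀ y : Fin 3, ({vi y, vj y} : Set V) =
      {(![ξ ⟨σ, Nat.le_of_succ_le hσ⟩,
          ξ ⟨false :: σ, by simpa using hσ⟩,
          ξ ⟨true :: σ, by simpa using hσ⟩] : Fin 3 → Fin s → V) y i,
       (![ξ ⟨σ, Nat.le_of_succ_le hσ⟩,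
          ξ ⟨false :: σ, by simpa using hσ⟩,
          ξ ⟨true :: σ, by simpa using hσ⟩] : Fin 3 → Fin s → V) y j}) ∧
    (∀ y, (Wi y).IsPath) ∧ (∀ y, (Wj y).IsPath) ∧
    (∀ y, ∀ v ∈ (Wi y).support, v ∈ torsoSet Tr X η I σ hσ) ∧
    (∀ y, ∀ v ∈ (Wj y).support, v ∈ torsoSet Tr X η I σ hσ) ∧
    (∀ y y' : Fin 3, y ≠ y' → ∀ v, v ∈ (Wi y).support → v ∈ (Wi y').support → v = ci) ∧
    (∀ y y' : Fin 3, y ≠ y' → ∀ v, v ∈ (Wj y).support → v ∈ (Wj y').support → v = cj) ∧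
    ((1 ≤ (Wi 0).length ∧ 1 ≤ (Wi 1).length) ∨ (1 ≤ (Wi 0).length ∧ 1 ≤ (Wi 2).length) ∨
      (1 ≤ (Wi 1).length ∧ 1 ≤ (Wi 2).length)) ∧
    ((1 ≤ (Wj 0).length ∧ 1 ≤ (Wj 1).length) ∨ (1 ≤ (Wj 0).length ∧ 1 ≤ (Wj 2).length) ∨
      (1 ≤ (Wj 1).length ∧ 1 ≤ (Wj 2).length)) ∧
    (((Wi 0).toSubgraph ⊔ (Wi 1).toSubgraph ⊔ (Wi 2).toSubgraph) ⊓
      ((Wj 0).toSubgraph ⊔ (Wj 1).toSubgraph ⊔ (Wj 2).toSubgraph)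
        = (Wi 2).toSubgraph ⊓ (Wj 1).toSubgraph) ∧
    ∃ (x y : V) (p : G.Walk x y), p.IsPath ∧
      (Wi 2).toSubgraph ⊓ (Wj 1).toSubgraph = p.toSubgraph ∧
      ci ∉ p.support ∧ cj ∉ p.support

/-- The major vertex `σ` has property `AB_{ij}`: in the `η`-torso at `σ` there are disjoint
paths `L_i, L_j` from `ξ_{t₁}(m)` to `ξ_{t₂}(m)` and disjoint paths `R_i, R_j` from
`ξ_{t₁}(m)` to `ξ_{t₃}(m)`, for `m ∈ {i, j}`. -/
def HasPropAB {V T : Type*} (G : SimpleGraph V) (Tr : SimpleGraph T) (X : T → Finset V)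
    {h s : ℕ} (η : TVert h → T) (I : Finset V) (ξ : MVert h → Fin s → V)
    (σ : List Bool) (hσ : σ.length + 1 ≤ h) (i j : Fin s) : Prop :=
  ∃ (Li : G.Walk (ξ ⟨σ, Nat.le_of_succ_le hσ⟩ i) (ξ ⟨false :: σ, by simpa using hσ⟩ i))
    (Lj : G.Walk (ξ ⟨σ, Nat.le_of_succ_le hσ⟩ j) (ξ ⟨false :: σ, by simpa using hσ⟩ j))
    (Ri : G.Walk (ξ ⟨σ, Nat.le_of_succ_le hσ⟩ i) (ξ ⟨true :: σ, by simpa using hσ⟩ i))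
    (Rj : G.Walk (ξ ⟨σ, Nat.le_of_succ_le hσ⟩ j) (ξ ⟨true :: σ, by simpa using hσ⟩ j)),
    Li.IsPath ∧ Lj.IsPath ∧ Ri.IsPath ∧ Rj.IsPath ∧
    (∀ v ∈ Li.support, v ∈ torsoSet Tr X η I σ hσ) ∧
    (∀ v ∈ Lj.support, v ∈ torsoSet Tr X η I σ hσ) ∧
    (∀ v ∈ Ri.support, v ∈ torsoSet Tr X η I σ hσ) ∧
    (∀ v ∈ Rj.support, v ∈ torsoSet Tr X η I σ hσ) ∧
    (∀ v ∈ Li.support, v ∉ Lj.support) ∧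
    (∀ v ∈ Ri.support, v ∉ Rj.support)

/-- A monotone homeomorphic embedding `T_a ↪ T_h`: the minor root maps to the minor root,
and for every major vertex with trinity `(t₁, t₂, t₃)`, the images of `t₂` and `t₃` are the
left and right neighbors of the (major) image of the vertex. -/
def IsMonotoneEmb (a h : ℕ) (γ : TVert a → TVert h) : Prop :=
  IsHomeoEmb (Tgraph a) (Tgraph h) γ ∧
  γ (Sum.inl ⟨[], Nat.zero_le a⟩) = Sum.inl ⟨[], Nat.zero_le h⟩ ∧
  ∀ (σ : List Bool) (hσ : σ.length + 1 ≤ a),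
    ∃ (τ : List Bool) (hτ : τ.length + 1 ≤ h),
      γ (Sum.inr ⟨σ, hσ⟩) = Sum.inr ⟨τ, hτ⟩ ∧
      γ (Sum.inl ⟨false :: σ, by simpa using hσ⟩) = Sum.inl ⟨false :: τ, by simpa using hτ⟩ ∧
      γ (Sum.inl ⟨true :: σ, by simpa using hσ⟩) = Sum.inl ⟨true :: τ, by simpa using hτ⟩

/-!
Fix a `k`-set `F` contained in all bags of the cascade. Suppose first that some `v ∉ F` lies in a
bag `X (η t)`, `t` minor, and in the bags at the leaves of a binary tree of height `a` embedded
below `t`. By (W2) every bag of that subtree contains `v`, which gives the first outcome.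

Otherwise a pigeonhole argument on the binary tree, with the at most `w` vertices of a bag as
colours, finds within `a * w` levels below any vertex of `T_h` a minor vertex whose bag meets the
given bag only in `F`. Alternating such steps between minor and major vertices embeds one level of
`T_b` into `2 * a * w + 1` levels of `T_h`. Bags at adjacent vertices of the resulting `T_b` meet
exactly in `F`, and (W2) extends this to all pairs of vertices.
-/

open Relation

/-! ### Betweenness -/

section Between

variable {A : Type*} {G : SimpleGraph A} {a b c d x y z : A}

/-- `y` lies on a path of `G` from `x` to `z`; for a tree this is the betweenness relation. -/
def IsBetween (G : SimpleGraph A) (x y z : A) : Prop :=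
  ∃ p : G.Walk x z, p.IsPath ∧ y ∈ p.support

theorem isBetween_iff_exists_append :
    IsBetween G x y z ↔ ∃ (p : G.Walk x y) (q : G.Walk y z), (p.append q).IsPath := by
  constructor
  · rintro ⟨r, hr, hy⟩
    obtain ⟨p, q, rfl⟩ := Walk.mem_support_iff_exists_append.1 hy
    exact ⟨p, q, hr⟩
  · rintro ⟨p, q, hpq⟩
    exact ⟨p.append q, hpq, by simp⟩

theorem IsBetween.symm (h : IsBetween G x y z) : IsBetween G z y x := by
  obtain ⟨p, hp, hy⟩ := h
  exact ⟨p.reverse, hp.reverse, by simpa using hy⟩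

theorem IsBetween.ne (h : IsBetween G x y z) (hxy : x ≠ y) : x ≠ z := by
  rintro rfl
  obtain ⟨p, hp, hy⟩ := h
  rw [(Walk.isPath_iff_nil.1 hp).eq_nil, Walk.support_nil, List.mem_singleton] at hy
  exact hxy hy.symm

theorem isBetween_right (hG : G.Connected) (x z : A) : IsBetween G x z z := by
  obtain ⟨p, hp⟩ := (hG x z).exists_isPath
  exact ⟨p, hp, p.end_mem_support⟩

theorem isBetween_left (hG : G.Connected) (x z : A) : IsBetween G x x z :=
  (isBetween_right hG z x).symm

theorem isPath_unique_of_isAcyclic (hG : G.IsAcyclic) {p q : G.Walk x y} (hp : p.IsPath)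
    (hq : q.IsPath) : p = q :=
  congrArg Subtype.val ((hG.subsingleton_path x y).elim ⟨p, hp⟩ ⟨q, hq⟩)

theorem IsBetween.isPath_append (hG : G.IsAcyclic) (h : IsBetween G x y z) {p : G.Walk x y}
    {q : G.Walk y z} (hp : p.IsPath) (hq : q.IsPath) : (p.append q).IsPath := by
  obtain ⟨p', q', hpq⟩ := isBetween_iff_exists_append.1 h
  rwa [isPath_unique_of_isAcyclic hG hp hpq.of_append_left,
    isPath_unique_of_isAcyclic hG hq hpq.of_append_right]

theorem IsBetween.trans_prefix (hG : G.IsAcyclic) (habd : IsBetween G a b d)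
    (hbcd : IsBetween G b c d) : IsBetween G a c d := by
  obtain ⟨p, q, hpq⟩ := isBetween_iff_exists_append.1 habd
  obtain ⟨q', hq', hc⟩ := hbcd
  obtain rfl := isPath_unique_of_isAcyclic hG hq' hpq.of_append_right
  exact ⟨p.append q', hpq, (Walk.mem_support_append_iff p q').2 (Or.inr hc)⟩

/-- In an acyclic graph being a path is a condition on consecutive edges, so two paths that
overlap in the nontrivial segment from `b` to `c` glue to a path. -/
theorem IsBetween.glue (hG : G.IsAcyclic) (habc : IsBetween G a b c) (hbcd : IsBetween G b c d)
    (hbc : b ≠ c) : IsBetween G a b d := by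
  obtain ⟨p, q, hpq⟩ := isBetween_iff_exists_append.1 habc
  obtain ⟨q', r, hqr⟩ := isBetween_iff_exists_append.1 hbcd
  obtain rfl := isPath_unique_of_isAcyclic hG hqr.of_append_left hpq.of_append_right
  refine isBetween_iff_exists_append.2 ⟨p, q'.append r, ?_⟩
  have hq : q'.edges ≠ [] := fun h => hbc (Walk.edges_eq_nil.1 h).eq
  rw [hG.isPath_iff_isChain, Walk.edges_append] at hpq hqr ⊢
  rw [Walk.edges_append, ← List.append_assoc]
  exact hpq.append_overlap hqr hq

theorem edges_disjoint_iff_isBetween (hG : G.IsAcyclic) {p : G.Walk x y} {q : G.Walk x z}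
    (hp : p.IsPath) (hq : q.IsPath) :
    (∀ e ∈ p.edges, e ∉ q.edges) ↔ IsBetween G y x z := by
  have hpath : (∀ e ∈ p.edges, e ∉ q.edges) ↔ (p.reverse.append q).IsPath := by
    rw [hG.isPath_iff_isTrail, Walk.isTrail_def, Walk.edges_append, List.nodup_append']
    simp [hp.isTrail.edges_nodup, hq.isTrail.edges_nodup, List.Disjoint]
  exact hpath.trans ⟨fun h => isBetween_iff_exists_append.2 ⟨_, _, h⟩,
    fun h => h.isPath_append hG hp.reverse hq⟩

end Between

/-! ### Homeomorphic embeddings into trees -/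

section LocallyHomeoEmb

variable {A B : Type*} {H : SimpleGraph A} {Tr : SimpleGraph B} {η : A → B}

/-- The local part of a homeomorphic embedding: `η` separates adjacent vertices, and the images of
two distinct edges at `t` leave `η t` in different directions. For connected `H` and a tree `Tr`
this already makes `η` a homeomorphic embedding. -/
structure IsLocallyHomeoEmb (H : SimpleGraph A) (Tr : SimpleGraph B) (η : A → B) : Prop where
  ne : ∀ ⦃x y⦄, H.Adj x y → η x ≠ η y
  isBetween : ∀ ⦃t t₁ t₂⦄, H.Adj t t₁ → H.Adj t t₂ → t₁ ≠ t₂ → IsBetween Tr (η t₁) (η t) (η t₂)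

theorem IsHomeoEmb.isLocallyHomeoEmb (hTr : Tr.IsTree) (hη : IsHomeoEmb H Tr η) :
    IsLocallyHomeoEmb H Tr η where
  ne _ _ hxy := hη.1.ne hxy.ne
  isBetween t t₁ t₂ h₁ h₂ hne := by
    obtain ⟨p, hp⟩ := (hTr.connected (η t) (η t₁)).exists_isPath
    obtain ⟨q, hq⟩ := (hTr.connected (η t) (η t₂)).exists_isPath
    exact (edges_disjoint_iff_isBetween hTr.isAcyclic hp hq).1 (hη.2 h₁ h₂ hne p q hp hq)

theorem IsLocallyHomeoEmb.isBetween_of_isPath_cons (hTr : Tr.IsTree)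
    (hη : IsLocallyHomeoEmb H Tr η) {u u' v : A} (huu' : H.Adj u u') (q : H.Walk u' v)
    (hq : (Walk.cons huu' q).IsPath) : IsBetween Tr (η u) (η u') (η v) := by
  induction q generalizing u with
  | nil => exact isBetween_right hTr.connected _ _
  | @cons u' u'' v hu'u'' r ih =>
    rw [Walk.cons_isPath_iff] at hq
    have hu : u ≠ u'' := fun h => hq.2 (by simp [h])
    exact (hη.isBetween huu'.symm hu'u'' hu).glue hTr.isAcyclic (ih hu'u'' hq.1) (hη.ne hu'u'')

theorem IsLocallyHomeoEmb.exists_adj_isBetween (hTr : Tr.IsTree) (hH : H.Connected)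
    (hη : IsLocallyHomeoEmb H Tr η) {u v : A} (huv : u ≠ v) :
    ∃ u', H.Adj u u' ∧ IsBetween Tr (η u) (η u') (η v) := by
  obtain ⟨p, hp⟩ := (hH u v).exists_isPath
  cases p with
  | nil => exact absurd rfl huv
  | cons h q => exact ⟨_, h, hη.isBetween_of_isPath_cons hTr h q hp⟩

theorem IsLocallyHomeoEmb.isHomeoEmb (hTr : Tr.IsTree) (hH : H.Connected)
    (hη : IsLocallyHomeoEmb H Tr η) : IsHomeoEmb H Tr η := by
  refine ⟨fun u v huv => ?_, fun t t₁ t₂ h₁ h₂ hne p q hp hq =>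
    (edges_disjoint_iff_isBetween hTr.isAcyclic hp hq).2 (hη.isBetween h₁ h₂ hne)⟩
  by_contra hne
  obtain ⟨u', hadj, hbtw⟩ := hη.exists_adj_isBetween hTr hH hne
  exact hbtw.ne (hη.ne hadj) huv

end LocallyHomeoEmb

/-! ### The tree `T_h` -/

section TTree

variable {h : ℕ}

/-- The parent-child relation of `T_h` rooted at its minor root. -/
inductive TChild : TVert h → TVert h → Prop
  | major (σ : List Bool) (hσ : σ.length + 1 ≤ h) :
      TChild (Sum.inl ⟨σ, Nat.le_of_succ_le hσ⟩) (Sum.inr ⟨σ, hσ⟩)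
  | minor (b : Bool) (σ : List Bool) (hσ : σ.length + 1 ≤ h) :
      TChild (Sum.inr ⟨σ, hσ⟩) (Sum.inl ⟨b :: σ, hσ⟩)

/-- The ancestor-descendant relation of `T_h`, reflexive by convention. -/
abbrev TDescends : TVert h → TVert h → Prop := ReflTransGen TChild

theorem tgraph_adj_iff {x y : TVert h} : (Tgraph h).Adj x y ↔ TChild x y ∨ TChild y x := by
  simp only [Tgraph, fromEdgeSet_adj, Set.mem_ofPred_eq]
  constructor
  · rintro ⟨⟨σ, hσ, he | ⟨b, he⟩⟩, -⟩ <;> obtain ⟨rfl, rfl⟩ | ⟨rfl, rfl⟩ := Sym2.eq_iff.1 he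
    exacts [Or.inr (.major σ hσ), Or.inl (.major σ hσ), Or.inl (.minor b σ hσ),
      Or.inr (.minor b σ hσ)]
  · rintro ((⟨σ, hσ⟩ | ⟨b, σ, hσ⟩) | (⟨σ, hσ⟩ | ⟨b, σ, hσ⟩))
    exacts [⟨⟨σ, hσ, Or.inl Sym2.eq_swap⟩, Sum.inl_ne_inr⟩,
      ⟨⟨σ, hσ, Or.inr ⟨b, rfl⟩⟩, Sum.inr_ne_inl⟩, ⟨⟨σ, hσ, Or.inl rfl⟩, Sum.inr_ne_inl⟩,
      ⟨⟨σ, hσ, Or.inr ⟨b, Sym2.eq_swap⟩⟩, Sum.inl_ne_inr⟩]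

theorem TChild.adj {x y : TVert h} (hxy : TChild x y) : (Tgraph h).Adj x y :=
  tgraph_adj_iff.2 (Or.inl hxy)

theorem TChild.parent_unique {x y z : TVert h} (hx : TChild x z) (hy : TChild y z) : x = y := by
  cases hx <;> cases hy <;> rfl

theorem TChild.ne_grandchild {x y z : TVert h} (hxy : TChild x y) (hyz : TChild y z) : x ≠ z := by
  rintro rfl
  cases hxy <;> cases hyz

theorem tDescends_of_suffix {τ σ : MVert h} (hτσ : τ.1 <:+ σ.1) :
    TDescends (Sum.inl τ) (Sum.inl σ) := by
  obtain ⟨τ, hτ⟩ := τ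
  obtain ⟨σ, hσ⟩ := σ
  obtain ⟨ρ, rfl : ρ ++ τ = σ⟩ := hτσ
  induction ρ with
  | nil => exact .refl
  | cons b ρ ih => exact ((ih (Nat.le_of_succ_le hσ)).tail (.major _ hσ)).tail (.minor b _ hσ)

theorem tDescends_major_of_suffix {τ : MVert h} {ν : JVert h} (hτν : τ.1 <:+ ν.1) :
    TDescends (Sum.inl τ) (Sum.inr ν) :=
  (tDescends_of_suffix (σ := ⟨ν.1, Nat.le_of_succ_le ν.2⟩) hτν).tail (.major ν.1 ν.2)

theorem tgraph_connected (h : ℕ) : (Tgraph h).Connected := by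
  have reachable_of_tDescends {x y : TVert h} (hxy : TDescends x y) :
      (Tgraph h).Reachable x y := by
    induction hxy with
    | refl => rfl
    | tail _ hyz ih => exact ih.trans hyz.adj.reachable
  refine (connected_iff_exists_forall_reachable _).2 ⟨Sum.inl ⟨[], Nat.zero_le h⟩, ?_⟩
  rintro (σ | σ)
  exacts [reachable_of_tDescends (tDescends_of_suffix List.nil_suffix),
    reachable_of_tDescends (tDescends_major_of_suffix List.nil_suffix)]

variable {T : Type*} {Tr : SimpleGraph T} {η : TVert h → T} {x y z : TVert h}

theorem IsLocallyHomeoEmb.isBetween_child (hTr : Tr.IsTree)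
    (hη : IsLocallyHomeoEmb (Tgraph h) Tr η) (hxy : TChild x y) (hyz : TDescends y z) :
    IsBetween Tr (η x) (η y) (η z) := by
  induction hyz using ReflTransGen.head_induction_on generalizing x with
  | refl => exact isBetween_right hTr.connected _ _
  | head hyy' _ ih =>
    have hlocal := hη.isBetween hxy.adj.symm hyy'.adj (hxy.ne_grandchild hyy')
    exact hlocal.glue hTr.isAcyclic (ih hyy') (hη.ne hyy'.adj)

theorem IsLocallyHomeoEmb.isBetween_descends (hTr : Tr.IsTree)
    (hη : IsLocallyHomeoEmb (Tgraph h) Tr η) (hxy : TDescends x y) (hyz : TDescends y z) :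
    IsBetween Tr (η x) (η y) (η z) := by
  induction hxy using ReflTransGen.head_induction_on with
  | refl => exact isBetween_left hTr.connected _ _
  | head hxx' hx'y ih =>
    exact (hη.isBetween_child hTr hxx' (hx'y.trans hyz)).trans_prefix hTr.isAcyclic ih

theorem IsLocallyHomeoEmb.isBetween_branches (hTr : Tr.IsTree)
    (hη : IsLocallyHomeoEmb (Tgraph h) Tr η) {m u v : TVert h} (hmx : TChild m x)
    (hmy : TChild m y) (hxy : x ≠ y) (hxu : TDescends x u) (hyv : TDescends y v) :
    IsBetween Tr (η u) (η m) (η v) := by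
  have hxv : IsBetween Tr (η x) (η m) (η v) :=
    (hη.isBetween hmx.adj hmy.adj hxy).glue hTr.isAcyclic (hη.isBetween_child hTr hmy hyv)
      (hη.ne hmy.adj)
  exact (hxv.symm.glue hTr.isAcyclic (hη.isBetween_child hTr hmx hxu) (hη.ne hmx.adj)).symm

end TTree

/-! ### Subcascades -/

section Subcascade

variable {n h : ℕ} {μ : MVert n → MVert h} {ν : JVert n → JVert h}

/-- The maps `μ` and `ν` place the minor and the major vertices of `T_n` in `T_h` so that each
major vertex lands below its parent, and its two children land in the two different branches below
it. -/
structure IsDescendingPair (μ : MVert n → MVert h) (ν : JVert n → JVert h) : Prop where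
  suffix : ∀ σ (hσ : σ.length + 1 ≤ n), (μ ⟨σ, Nat.le_of_succ_le hσ⟩).1 <:+ (ν ⟨σ, hσ⟩).1
  cons_suffix : ∀ b σ (hσ : σ.length + 1 ≤ n), b :: (ν ⟨σ, hσ⟩).1 <:+ (μ ⟨b :: σ, hσ⟩).1

theorem IsDescendingPair.tDescends (H : IsDescendingPair μ ν) {x y : TVert n} (hxy : TChild x y) :
    TDescends (Sum.map μ ν x) (Sum.map μ ν y) := by
  cases hxy with
  | major σ hσ => exact tDescends_major_of_suffix (H.suffix σ hσ)
  | minor b σ hσ =>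
    exact .head (.minor b _ (ν ⟨σ, hσ⟩).2) (tDescends_of_suffix (H.cons_suffix b σ hσ))

variable {T : Type*} {Tr : SimpleGraph T} {η : TVert h → T}

theorem IsDescendingPair.isBetween_siblings (hTr : Tr.IsTree) (H : IsDescendingPair μ ν)
    (hη : IsLocallyHomeoEmb (Tgraph h) Tr η) {t x y : TVert n} (hx : TChild t x)
    (hy : TChild t y) (hxy : x ≠ y) :
    IsBetween Tr (η (Sum.map μ ν x)) (η (Sum.map μ ν t)) (η (Sum.map μ ν y)) := by
  cases hx with
  | major σ hσ =>
    cases hy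
    exact absurd rfl hxy
  | minor b σ hσ =>
    obtain _ | ⟨b', _, _⟩ := hy
    have hb : b ≠ b' := by
      rintro rfl
      exact hxy rfl
    exact hη.isBetween_branches hTr (.minor b _ (ν ⟨σ, hσ⟩).2) (.minor b' _ (ν ⟨σ, hσ⟩).2)
      (by simpa using hb) (tDescends_of_suffix (H.cons_suffix b σ hσ))
      (tDescends_of_suffix (H.cons_suffix b' σ hσ))

theorem IsDescendingPair.isHomeoEmb_comp (hTr : Tr.IsTree) (H : IsDescendingPair μ ν)
    (hη : IsHomeoEmb (Tgraph h) Tr η) : IsHomeoEmb (Tgraph n) Tr (η ∘ Sum.map μ ν) := by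
  have hloc := hη.isLocallyHomeoEmb hTr
  refine IsLocallyHomeoEmb.isHomeoEmb hTr (tgraph_connected n) ⟨fun x y hxy => hη.1.ne ?_, ?_⟩
  · obtain (_ | _) | (_ | _) := tgraph_adj_iff.1 hxy <;> simp
  · intro t t₁ t₂ h₁ h₂ hne
    obtain h₁ | h₁ := tgraph_adj_iff.1 h₁ <;> obtain h₂ | h₂ := tgraph_adj_iff.1 h₂
    · exact H.isBetween_siblings hTr hloc h₁ h₂ hne
    · exact (hloc.isBetween_descends hTr (H.tDescends h₂) (H.tDescends h₁) :).symm
    · exact (hloc.isBetween_descends hTr (H.tDescends h₁) (H.tDescends h₂) :)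
    · exact absurd (h₁.parent_unique h₂) hne

theorem IsDescendingPair.isCascade_comp (hTr : Tr.IsTree) (H : IsDescendingPair μ ν) {V : Type*}
    {X : T → Finset V} {s : ℕ} (hη : IsCascade Tr X h s η) :
    IsCascade Tr X n s (η ∘ Sum.map μ ν) := by
  refine ⟨H.isHomeoEmb_comp hTr hη.1, fun l => hη.2.1 (μ l), ?_⟩
  rintro t ⟨a₁, a₂, hp⟩
  exact hη.2.2 t ⟨Sum.map μ ν a₁, Sum.map μ ν a₂, hp⟩

end Subcascade

/-- Builds labellings of `T_n` from the root downwards, where `Q` is an invariant of the labels of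
minor vertices by level, and `R` and `S` relate the label of a major vertex to those of its parent
and of its children. -/
theorem exists_labelling {α β : Type*} {n : ℕ} {Q : ℕ → α → Prop} {R : α → β → Prop}
    {S : β → Bool → α → Prop}
    (step : ∀ j < n, ∀ x, Q j x → ∃ y, R x y ∧ ∀ b, ∃ x', S y b x' ∧ Q (j + 1) x')
    {x₀ : α} (h₀ : Q 0 x₀) :
    ∃ (μ : MVert n → α) (ν : JVert n → β), (∀ l, Q l.1.length (μ l)) ∧
      ∀ σ (hσ : σ.length + 1 ≤ n), R (μ ⟨σ, Nat.le_of_succ_le hσ⟩) (ν ⟨σ, hσ⟩) ∧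
        ∀ b, S (ν ⟨σ, hσ⟩) b (μ ⟨b :: σ, hσ⟩) := by
  choose y hR x' hS hQ using step
  let f (σ : List Bool) : σ.length ≤ n → {x // Q σ.length x} :=
    σ.rec (fun _ => ⟨x₀, h₀⟩) fun b σ ih hσ =>
      have x := ih (Nat.le_of_succ_le hσ)
      ⟨x' σ.length hσ x.1 x.2 b, hQ σ.length hσ x.1 x.2 b⟩
  exact ⟨fun l => (f l.1 l.2).1, fun σ => y σ.1.length σ.2 _ (f σ.1 (Nat.le_of_succ_le σ.2)).2,
    fun l => (f l.1 l.2).2, fun σ hσ => ⟨hR .., fun b => hS ..⟩⟩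

/-! ### Binary subtrees with prescribed leaves -/

section BinarySubtree

/-- Below the string `τ` one can embed a binary tree of height `n` all of whose leaves satisfy `P`.
Strings grow at the front, so `τ` is an ancestor of `σ` when it is a suffix of `σ`. -/
inductive HasBinarySubtree (P : List Bool → Prop) : ℕ → List Bool → Prop
  | leaf {τ σ : List Bool} (hτσ : τ <:+ σ) (hσ : P σ) : HasBinarySubtree P 0 τ
  | node {n : ℕ} {τ ν : List Bool} (hτν : τ <:+ ν) (hν : ∀ b, HasBinarySubtree P n (b :: ν)) :
      HasBinarySubtree P (n + 1) τ

variable {P : List Bool → Prop} {n : ℕ} {τ τ' : List Bool}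

theorem HasBinarySubtree.of_suffix (hττ' : τ <:+ τ') (hτ' : HasBinarySubtree P n τ') :
    HasBinarySubtree P n τ := by
  cases hτ' with
  | leaf hτσ hσ => exact .leaf (hττ'.trans hτσ) hσ
  | node hτν hν => exact .node (hττ'.trans hτν) hν

theorem HasBinarySubtree.exists_leaf (hτ : HasBinarySubtree P n τ) : ∃ σ, τ <:+ σ ∧ P σ := by
  induction hτ with
  | leaf hτσ hσ => exact ⟨_, hτσ, hσ⟩
  | node hτν _ ih =>
    obtain ⟨σ, hνσ, hσ⟩ := ih true
    exact ⟨σ, hτν.trans ((List.suffix_cons true _).trans hνσ), hσ⟩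

/-- Lower the target of some colour `v` by one and recurse into both branches at `τ`: either one
branch yields another colour, or both yield `v` and can be joined at `τ`. -/
theorem exists_hasBinarySubtree_of_cover {ι : Type*} {C : Finset ι} {P : ι → List Bool → Prop}
    {f : ι → ℕ} {τ : List Bool}
    (hcover : ∀ σ, τ <:+ σ → σ.length = τ.length + ∑ v ∈ C, f v → ∃ v ∈ C, P v σ) :
    ∃ v ∈ C, HasBinarySubtree (P v) (f v) τ := by
  classical
  induction hd : ∑ v ∈ C, f v generalizing f τ with
  | zero =>
    obtain ⟨v, hv, hvτ⟩ := hcover τ List.suffix_rfl (by simp [hd])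
    have hfv : f v = 0 := Finset.sum_eq_zero_iff.1 hd v hv
    exact ⟨v, hv, hfv ▸ .leaf List.suffix_rfl hvτ⟩
  | succ d ih =>
    obtain ⟨v, hv, hfv⟩ : ∃ v ∈ C, f v ≠ 0 :=
      Finset.exists_ne_zero_of_sum_ne_zero (by rw [hd]; exact d.succ_ne_zero)
    obtain ⟨m, hm⟩ := Nat.exists_eq_succ_of_ne_zero hfv
    let g := Function.update f v m
    have hg : ∑ u ∈ C, g u = d := by
      rw [← Finset.add_sum_erase C f hv] at hd
      rw [Finset.sum_update_of_mem hv, Finset.sdiff_singleton_eq_erase]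
      lia
    have hbranch (b : Bool) : ∃ u ∈ C, HasBinarySubtree (P u) (g u) (b :: τ) := by
      refine ih (fun σ hσ hlen => hcover σ ((List.suffix_cons b τ).trans hσ) ?_) hg
      rw [hlen, hg, hd, List.length_cons, add_assoc, add_comm 1]
    by_cases hother : ∃ b, ∃ u ∈ C, u ≠ v ∧ HasBinarySubtree (P u) (g u) (b :: τ)
    · obtain ⟨b, u, hu, huv, hτ⟩ := hother
      rw [show g u = f u from Function.update_of_ne huv ..] at hτ
      exact ⟨u, hu, hτ.of_suffix (List.suffix_cons b τ)⟩
    · push Not at hother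
      refine ⟨v, hv, hm ▸ .node List.suffix_rfl fun b => ?_⟩
      obtain ⟨u, hu, hτ⟩ := hbranch b
      obtain rfl : u = v := by_contra fun huv => hother b u hu huv hτ
      rwa [show g u = m from Function.update_self ..] at hτ

theorem exists_suffix_forall_not {ι : Type*} {C : Finset ι} {P : ι → List Bool → Prop}
    (hP : ∀ v ∈ C, ¬ HasBinarySubtree (P v) n τ) :
    ∃ σ, τ <:+ σ ∧ σ.length = τ.length + C.card * n ∧ ∀ v ∈ C, ¬ P v σ := by
  by_contra! hcover
  obtain ⟨v, hv, hτ⟩ := exists_hasBinarySubtree_of_cover (f := fun _ => n) (τ := τ)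
    (by simpa using hcover)
  exact hP v hv hτ

end BinarySubtree

/-! ### Recurring vertices -/

section Recurs

variable {V T : Type*} {Tr : SimpleGraph T} {X : T → Finset V} {h a b w : ℕ} {η : TVert h → T}

/-- Axiom (W2) of a tree-decomposition. -/
def SatisfiesW2 (Tr : SimpleGraph T) (X : T → Finset V) : Prop :=
  ∀ ⦃x y z : T⦄, IsBetween Tr x y z → ∀ ⦃v : V⦄, v ∈ X x → v ∈ X z → v ∈ X y

/-- The string `σ` names a minor vertex of `T_h` whose bag contains `v`. -/
def MemMinorBag (X : T → Finset V) (η : TVert h → T) (v : V) (σ : List Bool) : Prop :=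
  ∃ hσ : σ.length ≤ h, v ∈ X (η (Sum.inl ⟨σ, hσ⟩))

/-- The vertex `v` is in the bag at the minor vertex `τ` and in the bags at the leaves of some
binary tree of height `n` below `τ`. -/
def RecursBelow (X : T → Finset V) (η : TVert h → T) (v : V) (n : ℕ) (τ : MVert h) : Prop :=
  v ∈ X (η (Sum.inl τ)) ∧ HasBinarySubtree (MemMinorBag X η v) n τ.1

theorem RecursBelow.exists_major (hTr : Tr.IsTree) (hX : SatisfiesW2 Tr X)
    (hη : IsLocallyHomeoEmb (Tgraph h) Tr η) {v : V} {n : ℕ} {τ : MVert h}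
    (hτ : RecursBelow X η v (n + 1) τ) :
    ∃ ν : JVert h, (τ.1 <:+ ν.1 ∧ v ∈ X (η (Sum.inr ν))) ∧
      ∀ b, RecursBelow X η v n ⟨b :: ν.1, ν.2⟩ := by
  obtain ⟨-, _ | @⟨_, _, ν, hτν, hsub⟩⟩ := hτ
  choose σ hνσ hσ hv using fun b => (hsub b).exists_leaf
  have hν : ν.length + 1 ≤ h := (hνσ true).length_le.trans (hσ true)
  have hdesc (b : Bool) : TDescends (Sum.inl ⟨b :: ν, hν⟩) (Sum.inl ⟨σ b, hσ b⟩) :=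
    tDescends_of_suffix (hνσ b)
  have hmajor : v ∈ X (η (Sum.inr ⟨ν, hν⟩)) :=
    hX (hη.isBetween_branches hTr (.minor false ν hν) (.minor true ν hν) (by simp) (hdesc false)
      (hdesc true)) (hv false) (hv true)
  exact ⟨⟨ν, hν⟩, ⟨hτν, hmajor⟩, fun b =>
    ⟨hX (hη.isBetween_child hTr (.minor b ν hν) (hdesc b)) hmajor (hv b), hsub b⟩⟩

theorem RecursBelow.exists_isDescendingPair (hTr : Tr.IsTree) (hX : SatisfiesW2 Tr X)
    (hη : IsLocallyHomeoEmb (Tgraph h) Tr η) {v : V} {τ : MVert h}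
    (hτ : RecursBelow X η v a τ) :
    ∃ (μ : MVert a → MVert h) (ν : JVert a → JVert h), IsDescendingPair μ ν ∧
      ∀ t, v ∈ X (η (Sum.map μ ν t)) := by
  obtain ⟨μ, ν, hμ, hμν⟩ := exists_labelling (n := a) (x₀ := τ)
    (Q := fun j τ => RecursBelow X η v (a - j) τ)
    (R := fun τ ν => τ.1 <:+ ν.1 ∧ v ∈ X (η (Sum.inr ν)))
    (S := fun (ν : JVert h) b (τ : MVert h) => b :: ν.1 <:+ τ.1)
    (fun j hj τ hτ => by
      rw [show a - j = a - (j + 1) + 1 by lia] at hτ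
      obtain ⟨ν, hν, hsub⟩ := hτ.exists_major hTr hX hη
      exact ⟨ν, hν, fun b => ⟨⟨b :: ν.1, ν.2⟩, List.suffix_rfl, hsub b⟩⟩)
    hτ
  refine ⟨μ, ν, ⟨fun σ hσ => (hμν σ hσ).1.1, fun b σ hσ => (hμν σ hσ).2 b⟩, ?_⟩
  rintro (l | ⟨σ, hσ⟩)
  exacts [(hμ l).1, (hμν σ hσ).1.2]

variable {F : Finset V}

theorem exists_minor_inter_subset (hTr : Tr.IsTree) (hX : SatisfiesW2 Tr X)
    (hη : IsLocallyHomeoEmb (Tgraph h) Tr η) (hw : ∀ t, (X t).card ≤ w)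
    (hF : ∀ v ∉ F, ∀ τ, ¬ RecursBelow X η v a τ) {x : TVert h} {τ : MVert h}
    (hxτ : TDescends x (Sum.inl τ)) (hτ : τ.1.length + w * a ≤ h) :
    ∃ σ : MVert h, τ.1 <:+ σ.1 ∧ σ.1.length ≤ τ.1.length + w * a ∧
      ∀ v ∈ X (η x), v ∈ X (η (Sum.inl σ)) → v ∈ F := by
  classical
  have hnot : ∀ v ∈ X (η x) \ F, ¬ HasBinarySubtree (MemMinorBag X η v) a τ.1 := by
    intro v hv hsub
    rw [Finset.mem_sdiff] at hv
    obtain ⟨σ, hτσ, hσ, hvσ⟩ := hsub.exists_leaf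
    have hvτ : v ∈ X (η (Sum.inl τ)) := hX (hη.isBetween_descends hTr hxτ
      (tDescends_of_suffix (σ := ⟨σ, hσ⟩) hτσ)) hv.1 hvσ
    exact hF v hv.2 τ ⟨hvτ, hsub⟩
  obtain ⟨σ, hτσ, hlen, hσ⟩ := exists_suffix_forall_not hnot
  have hle : σ.length ≤ τ.1.length + w * a := by
    rw [hlen]
    gcongr
    exact (Finset.card_le_card Finset.sdiff_subset).trans (hw _)
  refine ⟨⟨σ, hle.trans hτ⟩, hτσ, hle, fun v hvx hvσ => ?_⟩
  by_contra hvF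
  exact hσ v (Finset.mem_sdiff.2 ⟨hvx, hvF⟩) ⟨_, hvσ⟩

theorem exists_major_inter_subset (hTr : Tr.IsTree) (hX : SatisfiesW2 Tr X)
    (hη : IsLocallyHomeoEmb (Tgraph h) Tr η) (hw : ∀ t, (X t).card ≤ w)
    (hF : ∀ v ∉ F, ∀ τ, ¬ RecursBelow X η v a τ) {τ : MVert h}
    (hτ : τ.1.length + w * a + 1 ≤ h) :
    ∃ ν : JVert h, τ.1 <:+ ν.1 ∧ ν.1.length ≤ τ.1.length + w * a ∧
      ∀ v ∈ X (η (Sum.inl τ)), v ∈ X (η (Sum.inr ν)) → v ∈ F := by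
  obtain ⟨σ, hτσ, hlen, hσ⟩ :=
    exists_minor_inter_subset hTr hX hη hw hF (.refl (a := Sum.inl τ)) (Nat.le_of_succ_le hτ)
  have hσh : σ.1.length + 1 ≤ h := by lia
  refine ⟨⟨σ.1, hσh⟩, hτσ, hlen, fun v hvτ hvν => hσ v hvτ (hX ?_ hvτ hvν)⟩
  exact hη.isBetween_descends hTr (tDescends_of_suffix hτσ) (.single (.major σ.1 hσh))

theorem exists_isDescendingPair_adj_inter_subset (hTr : Tr.IsTree) (hX : SatisfiesW2 Tr X)
    (hη : IsLocallyHomeoEmb (Tgraph h) Tr η) (hw : ∀ t, (X t).card ≤ w)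
    (hh : (2 * a * w + 1) * b ≤ h) (hF : ∀ v ∉ F, ∀ τ, ¬ RecursBelow X η v a τ) :
    ∃ (μ : MVert b → MVert h) (ν : JVert b → JVert h), IsDescendingPair μ ν ∧
      ∀ t t', (Tgraph b).Adj t t' →
        ∀ v ∈ X (η (Sum.map μ ν t)), v ∈ X (η (Sum.map μ ν t')) → v ∈ F := by
  obtain ⟨μ, ν, -, hμν⟩ := exists_labelling (n := b) (x₀ := (⟨[], Nat.zero_le h⟩ : MVert h))
    (Q := fun j τ => τ.1.length ≤ (2 * a * w + 1) * j)
    (R := fun (τ : MVert h) (ν : JVert h) => τ.1 <:+ ν.1 ∧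
      ∀ v ∈ X (η (Sum.inl τ)), v ∈ X (η (Sum.inr ν)) → v ∈ F)
    (S := fun (ν : JVert h) c (τ : MVert h) => c :: ν.1 <:+ τ.1 ∧
      ∀ v ∈ X (η (Sum.inr ν)), v ∈ X (η (Sum.inl τ)) → v ∈ F)
    (fun j hj τ hτ => by
      have hlevel : (2 * a * w + 1) * (j + 1) ≤ h := (Nat.mul_le_mul_left _ hj).trans hh
      obtain ⟨ν, hτν, hνlen, hν⟩ :=
        exists_major_inter_subset hTr hX hη hw hF (τ := τ) (by lia)
      refine ⟨ν, ⟨hτν, hν⟩, fun c => ?_⟩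
      obtain ⟨σ, hνσ, hσlen, hσ⟩ := exists_minor_inter_subset hTr hX hη hw hF
        (.single (.minor c ν.1 ν.2)) (by simp only [List.length_cons]; lia)
      refine ⟨σ, ⟨hνσ, hσ⟩, ?_⟩
      simp only [List.length_cons] at hσlen
      lia)
    (by simp)
  refine ⟨μ, ν, ⟨fun σ hσ => (hμν σ hσ).1.1, fun c σ hσ => ((hμν σ hσ).2 c).1⟩, ?_⟩
  have hchild : ∀ t t', TChild t t' →
      ∀ v ∈ X (η (Sum.map μ ν t)), v ∈ X (η (Sum.map μ ν t')) → v ∈ F := by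
    rintro _ _ (⟨σ, hσ⟩ | ⟨c, σ, hσ⟩)
    exacts [(hμν σ hσ).1.2, ((hμν σ hσ).2 c).2]
  intro t t' hadj v hv hv'
  obtain htt' | ht't := tgraph_adj_iff.1 hadj
  exacts [hchild t t' htt' v hv hv', hchild t' t ht't v hv' hv]

end Recurs

/-! ### Common intersections of bags -/

section Intersection

variable {V T : Type*} {Tr : SimpleGraph T} {X : T → Finset V} {h k s : ℕ} {η : TVert h → T}

theorem le_ncard_iInter_iff {ι : Type*} [Nonempty ι] {Y : ι → Finset V} :
    k ≤ (⋂ i, (Y i : Set V)).ncard ↔ ∃ F : Finset V, F.card = k ∧ ∀ i, F ⊆ Y i := by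
  have hfin : (⋂ i, (Y i : Set V)).Finite :=
    (Y (Classical.arbitrary ι)).finite_toSet.subset (Set.iInter_subset _ _)
  constructor
  · intro hk
    rw [Set.ncard_eq_toFinset_card _ hfin] at hk
    obtain ⟨F, hF, rfl⟩ := Finset.exists_subset_card_eq hk
    exact ⟨F, rfl, fun i v hv => Set.mem_iInter.1 (hfin.mem_toFinset.1 (hF hv)) i⟩
  · rintro ⟨F, rfl, hF⟩
    rw [← Set.ncard_coe_finset]
    exact Set.ncard_le_ncard (Set.subset_iInter fun i => Finset.coe_subset.2 (hF i)) hfin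

theorem IsCascade.isInjectiveCascade (hTr : Tr.IsTree) (hX : SatisfiesW2 Tr X)
    (hη : IsCascade Tr X h s η) {F : Finset V} (hFs : F.card < s) (hF : ∀ t, F ⊆ X (η t))
    (hadj : ∀ t t', (Tgraph h).Adj t t' → ∀ v ∈ X (η t), v ∈ X (η t') → v ∈ F) :
    IsInjectiveCascade Tr X h s η F := by
  refine ⟨hη, hFs, fun t t' htt' => Set.Subset.antisymm ?_
    (Set.subset_inter (Finset.coe_subset.2 (hF t)) (Finset.coe_subset.2 (hF t')))⟩
  rintro v ⟨hv, hv'⟩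
  obtain ⟨u, htu, hbtw⟩ :=
    (hη.1.isLocallyHomeoEmb hTr).exists_adj_isBetween hTr (tgraph_connected h) htt'
  exact hadj t u htu v hv (hX hbtw hv hv')

end Intersection

theorem injective_cascade_or_bigger_intersection_general {a b s w k h : ℕ} {V T : Type*}
    {Tr : SimpleGraph T} {X : T → Finset V} (hTr : Tr.IsTree) (hX : SatisfiesW2 Tr X)
    (hw : ∀ t, (X t).card ≤ w) (hks : k < s) (hh : (2 * a * w + 1) * b ≤ h) {η : TVert h → T}
    (hη : IsCascade Tr X h s η) (hint : k ≤ (⋂ t : TVert h, ((X (η t) : Set V))).ncard) :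
    (∃ η' : TVert a → T, IsCascade Tr X a s η' ∧
      k + 1 ≤ (⋂ t : TVert a, ((X (η' t) : Set V))).ncard) ∨
    (∃ (η' : TVert b → T) (I : Finset V), IsInjectiveCascade Tr X b s η' I ∧ I.card = k) := by
  classical
  have hloc := hη.1.isLocallyHomeoEmb hTr
  have (n : ℕ) : Nonempty (TVert n) := ⟨Sum.inl ⟨[], Nat.zero_le n⟩⟩
  obtain ⟨F, rfl, hF⟩ := le_ncard_iInter_iff.1 hint
  by_cases hrec : ∃ v ∉ F, ∃ τ, RecursBelow X η v a τ
  · obtain ⟨v, hvF, τ, hτ⟩ := hrec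
    obtain ⟨μ, ν, H, hv⟩ := hτ.exists_isDescendingPair hTr hX hloc
    refine Or.inl ⟨_, H.isCascade_comp hTr hη, le_ncard_iInter_iff.2
      ⟨insert v F, Finset.card_insert_of_notMem hvF, fun t => ?_⟩⟩
    exact Finset.insert_subset (hv t) (hF _)
  · push Not at hrec
    obtain ⟨μ, ν, H, hadj⟩ := exists_isDescendingPair_adj_inter_subset hTr hX hloc hw hh hrec
    exact Or.inr ⟨_, F, (H.isCascade_comp hTr hη).isInjectiveCascade hTr hX hks
      (fun t => hF _) hadj, rfl⟩

/-- Lemma 4.5. Let `(T, X)` be a tree-decomposition of width `< w` of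
`G`, and `h = (2(a+2)w + 2)b`. If there is a cascade `η` of height `h` and size `s + k`
whose bags at images of `T_h` have at least `k` common elements, then either there is a
cascade of height `a` and size `s + k` whose bags have at least `k + 1` common elements, or
there is an injective cascade of height `b`, size `s + k`, and common intersection set of
size `k`. -/
theorem injective_cascade_or_bigger_intersection (a b s w k : ℕ)
    (ha : 0 < a) (hb : 0 < b) (hs : 0 < s) (hw : 0 < w)
    {V T : Type} [Fintype V] [Fintype T] (G : SimpleGraph V)
    (Tr : SimpleGraph T) (X : T → Finset V) (hTD : IsTreeDecomp G Tr X)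
    (hwidth : ∀ t, (X t).card ≤ w)
    (h : ℕ) (hh : h = (2 * (a + 2) * w + 2) * b)
    (η : TVert h → T) (hη : IsCascade Tr X h (s + k) η)
    (hint : k ≤ (⋂ t : TVert h, ((X (η t) : Set V))).ncard) :
    (∃ η' : TVert a → T, IsCascade Tr X a (s + k) η' ∧
      k + 1 ≤ (⋂ t : TVert a, ((X (η' t) : Set V))).ncard) ∨
    (∃ (η' : TVert b → T) (I : Finset V),
      IsInjectiveCascade Tr X b (s + k) η' I ∧ I.card = k) :=
  injective_cascade_or_bigger_intersection_general hTD.1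
    (fun _ _ _ ⟨p, hp, hy⟩ v => hTD.2.2.2 _ _ _ p hp hy v) hwidth (by lia)
    (hh ▸ Nat.mul_le_mul_right b (by lia)) hη hint
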